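/- Let 𝒴 be a finite linearly ordered set and let Q, Q' : 𝒴 → (0,1] be strictly positive probability mass functions on 𝒴. Let γ ∈ (0,1) and η ∈ (−1,∞), let (w_k)_{k≥1} be the truncated negative binomial distribution D_{η,γ} with mean m and probability generating function φ, and define A(y) = φ(Q(≤y)) − φ(Q(<y)) and A'(y) = φ(Q'(≤y)) − φ(Q'(<y)). Let ε₁ ≥ 0, δ₁ ≥ 0, ε̂ ≥ 0 and δ ≥ 0, and suppose: (i) ∑_y max(Q(y) − e^{ε₁} Q'(y), 0) ≤ δ₁ and ∑_y max(Q'(y) − e^{ε₁} Q(y), 0) ≤ δ₁; and (ii) ∑_y max(Q(y) − e^{ε̂} Q'(y), 0) ≤ δ/m. Then with ε = ε̂ + (η+1)·log( e^{ε₁} + ((1−γ)/γ)·δ₁ ) one has ∑_{y∈𝒴} max(A(y) − e^{ε}·A'(y), 0) ≤ δ. -/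

import Mathlib

/-!
The generating function `φ` of `D_{η,γ}` has derivative
`φ'(z) = m · (γ / (1 - (1 - γ) z)) ^ (η + 1)` on `[0, 1]`; in particular `φ' ≤ m` there
(`exists_pgf_antideriv`, from the binomial and logarithmic series).

Fix `y` and move `a t = Q(< y) + t Q(y)` and `b t = Q'(< y) + t Q'(y)` along `t ∈ [0, 1]`. Both tails
`1 - Q(< y)` and `1 - Q(≤ y)` are masses of events, so `(ε₁, δ₁)`-privacy bounds the tails of `Q'` by
those of `Q`, and by interpolation `1 - b t ≤ e^{ε₁} (1 - a t) + δ₁`. This yields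
`φ'(a t) ≤ C ^ (η + 1) · φ'(b t)` with `C = e^{ε₁} + ((1 - γ) / γ) δ₁` (`ratio_le`). Hence
`d/dt [φ(a t) - e^ε φ(b t)] = Q(y) φ'(a t) - e^{ε̂} C ^ (η + 1) Q'(y) φ'(b t)`
`≤ (Q(y) - e^{ε̂} Q'(y)) φ'(a t) ≤ m · max (Q(y) - e^{ε̂} Q'(y)) 0`,
so `A(y) - e^ε A'(y) ≤ m · max (Q(y) - e^{ε̂} Q'(y)) 0`, and summing over `y` gives `m · (δ / m) = δ`.
-/

open Finset Real

/-- Cumulative mass `Q(≤ y)` of a pmf on a finite linearly ordered set. -/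
noncomputable def cumLE {Y : Type*} [Fintype Y] [LinearOrder Y] (Q : Y → ℝ) (y : Y) : ℝ :=
  ∑ z ∈ Finset.univ.filter (fun z => z ≤ y), Q z

/-- Cumulative mass `Q(< y)` of a pmf on a finite linearly ordered set. -/
noncomputable def cumLT {Y : Type*} [Fintype Y] [LinearOrder Y] (Q : Y → ℝ) (y : Y) : ℝ :=
  ∑ z ∈ Finset.univ.filter (fun z => z < y), Q z

/-- The pmf of the truncated negative binomial distribution `D_{η,γ}` (supported on `k ≥ 1`). -/
noncomputable def negBinPMF (η γ : ℝ) (k : ℕ) : ℝ :=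
  if k = 0 then 0
  else if η = 0 then (1 - γ) ^ k / (k * Real.log (1 / γ))
  else (1 - γ) ^ k / (γ ^ (-η) - 1) * ∏ i ∈ Finset.range k, ((i + η) / (i + 1))

/-- The mean of the truncated negative binomial distribution `D_{η,γ}`. -/
noncomputable def negBinMean (η γ : ℝ) : ℝ :=
  if η = 0 then (1 / γ - 1) / Real.log (1 / γ)
  else η * (1 - γ) / (γ * (1 - γ ^ η))

/-- The probability generating function of a distribution `w` on ℕ. -/
noncomputable def pgf (w : ℕ → ℝ) (z : ℝ) : ℝ := ∑' k : ℕ, w k * z ^ k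

/-- Up to normalization and the factor `(1 - γ) ^ n`, the weights of `D_{η,γ}` are generalized
binomial coefficients. -/
lemma prod_eq_choose (η : ℝ) (n : ℕ) :
    ∏ i ∈ Finset.range n, (((i : ℝ) + η) / (i + 1)) = Ring.choose (η + n - 1) n := by
  rw [← Ring.multichoose_eq]
  have h := Ring.factorial_nsmul_multichoose_eq_ascPochhammer η n
  rw [Polynomial.ascPochhammer_smeval_eq_eval, nsmul_eq_mul] at h
  have key : (n.factorial : ℝ) * ∏ i ∈ Finset.range n, (((i : ℝ) + η) / (i + 1))
      = (ascPochhammer ℝ n).eval η := by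
    clear h
    induction n with
    | zero => simp
    | succ k ih =>
      rw [Finset.prod_range_succ, ascPochhammer_succ_eval, ← ih, Nat.factorial_succ]
      push_cast
      field_simp
      ring
  exact mul_left_cancel₀ (Nat.cast_ne_zero.mpr n.factorial_ne_zero) (key.trans h.symm)

lemma hasSum_negBin (η : ℝ) {x : ℝ} (hx : |x| < 1) :
    HasSum (fun n : ℕ => (∏ i ∈ Finset.range n, (((i : ℝ) + η) / (i + 1))) * x ^ n)
      ((1 - x) ^ (-η)) := by
  have h := (Real.one_div_one_sub_rpow_hasFPowerSeriesOnBall_zero η).hasSum (y := x)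
    (by simpa [enorm_eq_nnnorm] using! hx)
  have h1 : 0 ≤ 1 - x := by linarith [(abs_lt.mp hx).2]
  simp only [zero_add, one_div, ← Real.rpow_neg h1] at h
  convert! h using 2 with n
  rw [prod_eq_choose]
  simp [FormalMultilinearSeries.ofScalars, mul_comm]

lemma negBinMean_pos {η γ : ℝ} (hγ : γ ∈ Set.Ioo (0 : ℝ) 1) : 0 < negBinMean η γ := by
  obtain ⟨h0, h1⟩ := hγ
  unfold negBinMean
  split_ifs with h
  · have : 1 < 1 / γ := by rw [lt_div_iff₀ h0]; linarith
    exact div_pos (by linarith) (Real.log_pos this)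
  · rcases lt_or_gt_of_ne h with hneg | hpos
    · have := Real.one_lt_rpow_of_pos_of_lt_one_of_neg h0 h1 hneg
      exact div_pos_of_neg_of_neg (by nlinarith) (by nlinarith)
    · have := Real.rpow_lt_one h0.le h1 hpos
      exact div_pos (by nlinarith) (by nlinarith)

/-- On `[0, 1]` the generating function of `D_{η,γ}` agrees with a function whose derivative is
`m · (γ / (1 - (1 - γ) z)) ^ (η + 1)`, endpoints included: this is the closed form
`((1 - (1 - γ) z) ^ (-η) - 1) / (γ ^ (-η) - 1)`, or its logarithmic analogue when `η = 0`. -/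
lemma exists_pgf_antideriv (η γ : ℝ) (hγ : γ ∈ Set.Ioo (0 : ℝ) 1) :
    ∃ G : ℝ → ℝ, (∀ z ∈ Set.Icc (0 : ℝ) 1, pgf (negBinPMF η γ) z = G z) ∧
      ∀ z ∈ Set.Icc (0 : ℝ) 1,
        HasDerivAt G (negBinMean η γ * (γ / (1 - (1 - γ) * z)) ^ (η + 1)) z := by
  obtain ⟨h0, h1⟩ := hγ
  have habs : ∀ z ∈ Set.Icc (0 : ℝ) 1, |(1 - γ) * z| < 1 := fun z hz => by
    rw [abs_of_nonneg (mul_nonneg (by linarith) hz.1)]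
    nlinarith [hz.1, hz.2]
  have hpos : ∀ z ∈ Set.Icc (0 : ℝ) 1, 0 < 1 - (1 - γ) * z := fun z hz => by
    linarith [(abs_lt.mp (habs z hz)).2]
  have hlin : ∀ z : ℝ, HasDerivAt (fun z : ℝ => 1 - (1 - γ) * z) (-(1 - γ)) z := fun z => by
    simpa using ((hasDerivAt_id z).const_mul (1 - γ)).const_sub 1
  by_cases h : η = 0
  · subst h
    have hL : 0 < Real.log (1 / γ) := Real.log_pos (by rw [lt_div_iff₀ h0]; linarith)
    refine ⟨fun z => -Real.log (1 - (1 - γ) * z) / Real.log (1 / γ), fun z hz => ?_,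
      fun z hz => ?_⟩
    · have hs := (Real.hasSum_pow_div_log_of_abs_lt_one (habs z hz)).div_const (Real.log (1 / γ))
      refine HasSum.tsum_eq ((hasSum_nat_add_iff' 1).mp ?_)
      convert! hs using 1
      · ext n
        simp only [negBinPMF, mul_pow]
        simp
        field_simp
      · simp [negBinPMF]
    · have := (((hlin z).log (hpos z hz).ne').neg).div_const (Real.log (1 / γ))
      convert! this using 1
      have := (hpos z hz).ne'
      simp only [negBinMean, if_true, zero_add, Real.rpow_one]
      field_simp
  · have hg : γ ^ (-η) - 1 ≠ 0 := by
      rcases lt_or_gt_of_ne h with hneg | hp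
      · have := Real.rpow_lt_one h0.le h1 (neg_pos.mpr hneg)
        linarith
      · have := Real.one_lt_rpow_of_pos_of_lt_one_of_neg h0 h1 (neg_lt_zero.mpr hp)
        linarith
    refine ⟨fun z => ((1 - (1 - γ) * z) ^ (-η) - 1) / (γ ^ (-η) - 1), fun z hz => ?_,
      fun z hz => ?_⟩
    · have hs := (hasSum_nat_add_iff' 1).mpr (hasSum_negBin η (habs z hz))
      have hs := hs.div_const (γ ^ (-η) - 1)
      refine HasSum.tsum_eq ((hasSum_nat_add_iff' 1).mp ?_)
      convert! hs using 1
      · ext n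
        simp only [negBinPMF, h, mul_pow, if_false, Nat.succ_ne_zero]
        ring
      · simp [negBinPMF]
    · have := (((hlin z).rpow_const (p := -η) (Or.inl (hpos z hz).ne')).sub_const 1).div_const
        (γ ^ (-η) - 1)
      convert! this using 1
      have hp := hpos z hz
      have e1 : γ ^ (-η) = (γ ^ η)⁻¹ := Real.rpow_neg h0.le η
      have e2 : (1 - (1 - γ) * z) ^ (-η - 1) = ((1 - (1 - γ) * z) ^ (η + 1))⁻¹ := by
        rw [← Real.rpow_neg hp.le]; ring_nf
      have hgp : 0 < γ ^ η := Real.rpow_pos_of_pos h0 η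
      have hpp : 0 < (1 - (1 - γ) * z) ^ (η + 1) := Real.rpow_pos_of_pos hp _
      rw [e1] at hg ⊢
      have hg' : 1 - γ ^ η ≠ 0 := fun hc => hg (by
        rw [show γ ^ η = 1 by linarith]; norm_num)
      rw [e2, Real.div_rpow h0.le hp.le, Real.rpow_add_one h0.ne' η]
      simp only [negBinMean, h, if_false]
      have : (γ ^ η)⁻¹ - 1 = (1 - γ ^ η) / γ ^ η := by field_simp
      rw [this]
      field_simp

/-- Approximate privacy applied to the complement of `S`. -/
lemma compl_mass_le {Y : Type*} [Fintype Y] [DecidableEq Y] (Q Q' : Y → ℝ)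
    (hQ : ∑ y, Q y = 1) (hQ' : ∑ y, Q' y = 1) (e δ₁ : ℝ)
    (h : ∑ y, max (Q' y - e * Q y) 0 ≤ δ₁) (S : Finset Y) :
    1 - ∑ z ∈ S, Q' z ≤ e * (1 - ∑ z ∈ S, Q z) + δ₁ := by
  have h1 := Finset.sum_add_sum_compl S Q
  have h2 := Finset.sum_add_sum_compl S Q'
  have h3 : ∑ z ∈ Sᶜ, (Q' z - e * Q z) ≤ δ₁ :=
    calc _ ≤ ∑ z ∈ Sᶜ, max (Q' z - e * Q z) 0 := Finset.sum_le_sum fun z _ => le_max_left _ _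
      _ ≤ ∑ z, max (Q' z - e * Q z) 0 :=
        Finset.sum_le_sum_of_subset_of_nonneg (Finset.subset_univ _) fun _ _ _ => le_max_right _ _
      _ ≤ δ₁ := h
  rw [Finset.sum_sub_distrib, ← Finset.mul_sum] at h3
  have h4 : 1 - ∑ z ∈ S, Q z = ∑ z ∈ Sᶜ, Q z := by linarith
  rw [h4]
  linarith

lemma cumLE_eq {Y : Type*} [Fintype Y] [LinearOrder Y] (Q : Y → ℝ) (y : Y) :
    cumLE Q y = cumLT Q y + Q y := by
  have : Finset.univ.filter (fun z => z ≤ y) = insert y (Finset.univ.filter (fun z => z < y)) := by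
    ext z; simp [le_iff_eq_or_lt]
  unfold cumLE cumLT
  rw [this, Finset.sum_insert (by simp)]
  ring

/-- If `1 - b ≤ e (1 - a) + δ₁`, then the density `(γ / (1 - (1 - γ) z)) ^ (η + 1)` at `a` exceeds the
one at `b` by a factor of at most `(e + ((1 - γ) / γ) δ₁) ^ (η + 1)`: the denominator at `a` is at
least `γ`, which turns the additive `(1 - γ) δ₁` into a relative error. -/
lemma ratio_le {γ η e δ₁ a b : ℝ} (hγ : γ ∈ Set.Ioo (0 : ℝ) 1) (hη : -1 < η) (he : 1 ≤ e)
    (hδ : 0 ≤ δ₁) (ha : a ≤ 1) (hb : b ≤ 1) (h : 1 - b ≤ e * (1 - a) + δ₁) :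
    (γ / (1 - (1 - γ) * a)) ^ (η + 1) ≤
      (e + (1 - γ) / γ * δ₁) ^ (η + 1) * (γ / (1 - (1 - γ) * b)) ^ (η + 1) := by
  obtain ⟨h0, h1⟩ := hγ
  have hsa : γ ≤ 1 - (1 - γ) * a := by nlinarith
  have hsb : γ ≤ 1 - (1 - γ) * b := by nlinarith
  have hk : 0 ≤ (1 - γ) / γ * δ₁ := mul_nonneg (div_nonneg (by linarith) h0.le) hδ
  have hpa : 0 < 1 - (1 - γ) * a := by linarith
  have hpb : 0 < 1 - (1 - γ) * b := by linarith
  rw [← Real.mul_rpow (by linarith) (by positivity)]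
  refine Real.rpow_le_rpow (by positivity) ?_ (by linarith)
  have hkey : 1 - (1 - γ) * b ≤ (e + (1 - γ) / γ * δ₁) * (1 - (1 - γ) * a) := by
    have e1 : (1 - γ) / γ * δ₁ * γ = (1 - γ) * δ₁ := by field_simp
    have e2 := mul_le_mul_of_nonneg_left hsa hk
    have e3 := mul_le_mul_of_nonneg_left h (by linarith : 0 ≤ 1 - γ)
    nlinarith
  rw [← mul_div_assoc, div_le_div_iff₀ hpa hpb]
  nlinarith

/-- Corollary 6.2: adjusting hyperparameters — if the base mechanism is (ε₁,δ₁)-DP and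
(ε̂, δ/m)-DP on the pair (Q, Q'), then the private selection algorithm with a truncated
negative binomial number of candidates is (ε, δ)-DP for
ε = ε̂ + (η+1)·log(e^{ε₁} + ((1−γ)/γ)·δ₁). -/
theorem private_selection_negbin_adjusted
    {Y : Type*} [Fintype Y] [LinearOrder Y]
    (Q Q' : Y → ℝ)
    (hQ_pos : ∀ y, 0 < Q y) (hQ_le : ∀ y, Q y ≤ 1) (hQ_sum : ∑ y, Q y = 1)
    (hQ'_pos : ∀ y, 0 < Q' y) (hQ'_le : ∀ y, Q' y ≤ 1) (hQ'_sum : ∑ y, Q' y = 1)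
    (γ η : ℝ) (hγ : γ ∈ Set.Ioo (0 : ℝ) 1) (hη : -1 < η)
    (m : ℝ) (hm : m = negBinMean η γ)
    (A A' : Y → ℝ)
    (hA : ∀ y, A y = pgf (negBinPMF η γ) (cumLE Q y) - pgf (negBinPMF η γ) (cumLT Q y))
    (hA' : ∀ y, A' y = pgf (negBinPMF η γ) (cumLE Q' y) - pgf (negBinPMF η γ) (cumLT Q' y))
    (ε₁ δ₁ εhat δ : ℝ)
    (hε₁ : 0 ≤ ε₁) (hδ₁ : 0 ≤ δ₁) (hεhat : 0 ≤ εhat) (hδ : 0 ≤ δ)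
    (hQDP : ∑ y, max (Q y - Real.exp ε₁ * Q' y) 0 ≤ δ₁)
    (hQDP' : ∑ y, max (Q' y - Real.exp ε₁ * Q y) 0 ≤ δ₁)
    (hQDPhat : ∑ y, max (Q y - Real.exp εhat * Q' y) 0 ≤ δ / m)
    (ε : ℝ)
    (hε : ε = εhat + (η + 1) * Real.log (Real.exp ε₁ + ((1 - γ) / γ) * δ₁)) :
    ∑ y, max (A y - Real.exp ε * A' y) 0 ≤ δ := by
  have hmpos : 0 < m := hm ▸ negBinMean_pos hγ
  obtain ⟨G, hG, hG'⟩ := exists_pgf_antideriv η γ hγ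
  rw [← hm] at hG'
  have he1 : 1 ≤ Real.exp ε₁ := Real.one_le_exp hε₁
  have hk : 0 ≤ (1 - γ) / γ * δ₁ :=
    mul_nonneg (div_nonneg (by linarith [hγ.2]) hγ.1.le) hδ₁
  set C := Real.exp ε₁ + (1 - γ) / γ * δ₁ with hC
  have hexp : Real.exp ε = Real.exp εhat * C ^ (η + 1) := by
    rw [hε, Real.exp_add, Real.rpow_def_of_pos (by linarith), mul_comm (Real.log C)]
  have mass_le : ∀ P : Y → ℝ, (∀ y, 0 < P y) → ∑ y, P y = 1 → ∀ S : Finset Y, ∑ z ∈ S, P z ≤ 1 :=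
    fun P hP h S => h ▸ Finset.sum_le_sum_of_subset_of_nonneg (Finset.subset_univ S)
      fun z _ _ => (hP z).le
  have mem : ∀ P : Y → ℝ, (∀ y, 0 < P y) → ∑ y, P y = 1 → ∀ y, ∀ t ∈ Set.Icc (0 : ℝ) 1,
      cumLT P y + t * P y ∈ Set.Icc (0 : ℝ) 1 := fun P hP h y t ht => by
    have h1 : cumLE P y ≤ 1 := mass_le P hP h _
    have h2 : 0 ≤ cumLT P y := Finset.sum_nonneg fun z _ => (hP z).le
    rw [cumLE_eq] at h1
    have := hP y
    constructor <;> nlinarith [ht.1, ht.2]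
  have pointwise : ∀ y, max (A y - Real.exp ε * A' y) 0
      ≤ m * max (Q y - Real.exp εhat * Q' y) 0 := fun y => by
    refine max_le ?_ (mul_nonneg hmpos.le (le_max_right _ _))
    set M := max (Q y - Real.exp εhat * Q' y) 0 with hM
    set a : ℝ → ℝ := fun t => cumLT Q y + t * Q y with ha
    set b : ℝ → ℝ := fun t => cumLT Q' y + t * Q' y with hb
    set D : ℝ → ℝ := fun z => (γ / (1 - (1 - γ) * z)) ^ (η + 1) with hD
    have hder : ∀ t ∈ Set.Icc (0 : ℝ) 1,
        HasDerivAt (fun t => G (a t) - Real.exp ε * G (b t) - m * M * t)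
          (m * D (a t) * Q y - Real.exp ε * (m * D (b t) * Q' y) - m * M) t := fun t ht => by
      have da : HasDerivAt a (Q y) t := by
        simpa [ha] using (hasDerivAt_id t).mul_const (Q y)
      have db : HasDerivAt b (Q' y) t := by
        simpa [hb] using (hasDerivAt_id t).mul_const (Q' y)
      have ga := (hG' (a t) (mem Q hQ_pos hQ_sum y t ht)).comp t da
      have gb := (hG' (b t) (mem Q' hQ'_pos hQ'_sum y t ht)).comp t db
      simpa using! (ga.sub (gb.const_mul (Real.exp ε))).sub ((hasDerivAt_id t).const_mul (m * M))
    have hanti : AntitoneOn (fun t => G (a t) - Real.exp ε * G (b t) - m * M * t)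
        (Set.Icc (0 : ℝ) 1) := by
      refine antitoneOn_of_hasDerivWithinAt_nonpos (convex_Icc 0 1)
        (fun t ht => (hder t ht).continuousAt.continuousWithinAt)
        (fun t ht => (hder t (interior_subset ht)).hasDerivWithinAt) fun t ht => ?_
      have ht : t ∈ Set.Icc (0 : ℝ) 1 := interior_subset ht
      have hat := mem Q hQ_pos hQ_sum y t ht
      have hbt := mem Q' hQ'_pos hQ'_sum y t ht
      -- Interpolate the tail bounds for the events `≥ y` (weight `1 - t`) and `> y` (weight `t`).
      have htail : 1 - b t ≤ Real.exp ε₁ * (1 - a t) + δ₁ := by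
        have h1 : 1 - cumLT Q' y ≤ Real.exp ε₁ * (1 - cumLT Q y) + δ₁ :=
          compl_mass_le Q Q' hQ_sum hQ'_sum _ _ hQDP' _
        have h2 : 1 - cumLE Q' y ≤ Real.exp ε₁ * (1 - cumLE Q y) + δ₁ :=
          compl_mass_le Q Q' hQ_sum hQ'_sum _ _ hQDP' _
        rw [cumLE_eq, cumLE_eq] at h2
        have h3 := mul_le_mul_of_nonneg_left h1 (sub_nonneg.mpr ht.2)
        have h4 := mul_le_mul_of_nonneg_left h2 ht.1
        simp only [ha, hb]
        linarith
      have hr : D (a t) ≤ C ^ (η + 1) * D (b t) :=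
        ratio_le hγ hη he1 hδ₁ hat.2 hbt.2 htail
      have hden : γ ≤ 1 - (1 - γ) * a t := by nlinarith [hγ.2, hat.2]
      have hden0 : 0 < 1 - (1 - γ) * a t := hγ.1.trans_le hden
      have hD0 : 0 ≤ D (a t) := Real.rpow_nonneg (div_nonneg hγ.1.le hden0.le) _
      have hD1 : D (a t) ≤ 1 := Real.rpow_le_one (div_nonneg hγ.1.le hden0.le)
        ((div_le_one hden0).mpr hden) (by linarith)
      have s1 : Real.exp εhat * Q' y * D (a t) ≤ Real.exp ε * (D (b t) * Q' y) := by
        rw [hexp]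
        have := mul_le_mul_of_nonneg_left hr
          (mul_nonneg (Real.exp_pos εhat).le (hQ'_pos y).le)
        linarith
      have s2 : (Q y - Real.exp εhat * Q' y) * D (a t) ≤ M :=
        calc _ ≤ M * D (a t) := mul_le_mul_of_nonneg_right (le_max_left _ _) hD0
          _ ≤ M := mul_le_of_le_one_right (le_max_right _ _) hD1
      have s3 : D (a t) * Q y - Real.exp ε * (D (b t) * Q' y) - M ≤ 0 := by linarith
      have := mul_nonpos_of_nonneg_of_nonpos hmpos.le s3
      linarith
    have h01 := hanti (Set.left_mem_Icc.mpr zero_le_one) (Set.right_mem_Icc.mpr zero_le_one)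
      zero_le_one
    have q0 := mem Q hQ_pos hQ_sum y 0 (by simp)
    have q1 := mem Q hQ_pos hQ_sum y 1 (by simp)
    have q0' := mem Q' hQ'_pos hQ'_sum y 0 (by simp)
    have q1' := mem Q' hQ'_pos hQ'_sum y 1 (by simp)
    simp only [ha, hb, zero_mul, one_mul, add_zero, mul_zero, mul_one] at h01 q0 q1 q0' q1'
    rw [hA, hA', cumLE_eq, cumLE_eq, hG _ q0, hG _ q1, hG _ q0', hG _ q1']
    linarith
  calc _ ≤ ∑ y, m * max (Q y - Real.exp εhat * Q' y) 0 := Finset.sum_le_sum fun y _ => pointwise y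
    _ = m * ∑ y, max (Q y - Real.exp εhat * Q' y) 0 := (Finset.mul_sum _ _ _).symm
    _ ≤ m * (δ / m) := mul_le_mul_of_nonneg_left hQDPhat hmpos.le
    _ = δ := mul_div_cancel₀ δ hmpos.ne'
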